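/- Let (a_n)_{n≥0} and (h_m)_{m≥0} be sequences of nonnegative real numbers with a_0 = 0 and a_n > 0 for some n ≥ 1. Let r ∈ (0,∞) be the radius of convergence of ∑_n a_n x^n (so ∑_n a_n x^n is summable for 0 ≤ x < r and not summable for x > r), and assume both ∑_n a_n r^n and ∑_n n·a_n r^n are summable. Suppose that for every real x with 0 ≤ x < r the series ∑_m h_m * (∑_n a_n x^n)^m is summable with sum equal to (∑_n a_n x^n) - x. Then the radius of convergence of ∑_m h_m y^m, namely sup{ y ≥ 0 : ∑_m h_m y^m is summable }, equals ∑_n a_n r^n. -/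

import Mathlib

/-!
Write `g(x) = ∑ a_n xⁿ`, `h(y) = ∑ h_m yᵐ` and `G = g(r)`. The identity `h(g(x)) = g(x) - x` makes
`h` converge at `g(x)` for every `x < r`, and `g(x) → G` as `x → r⁻`, so the radius of `h` is at
least `G`.

Suppose `h` converged at some `y₁ > G`. Then `ψ(y) = y - h(y)` is real-analytic at `G`, and
`ψ(g(x)) = x` on `[0, r]`. Finiteness of `g'(r) = ∑ n a_n r^(n-1)` bounds `G - g(x)` by a constant
times `r - x` (`sub_tsum_le`), which rules out `ψ'(G) = 0`. The inverse function theorem therefore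
gives a function analytic at `r` that agrees with `g` to the left of `r`. By Pringsheim's theorem
(`exists_gt_summable_of_analyticAt`) the series of `g` then converges at some point beyond `r`,
contrary to the choice of `r`.

Pringsheim's theorem comes from re-expanding `g` at a point `x₀ < r`: the new coefficients
`∑_n a_n C(n,k) x₀^(n-k)` are nonnegative sums, so by Tonelli their power series converges at `t ≥ 0`
only if `∑ a_n (x₀ + t)ⁿ` does.
-/

open Filter Topology

/-- The `k`-th Taylor coefficient at `x₀` of `∑ a_n xⁿ`. -/
noncomputable def taylorCoeffAt (a : ℕ → ℝ) (x₀ : ℝ) (k : ℕ) : ℝ :=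
  ∑' n : ℕ, a n * n.choose k * x₀ ^ (n - k)

/-- Binomial expansion of one monomial, as an infinite sum (the terms with `k > n` vanish). -/
lemma hasSum_binomial (c x₀ s : ℝ) (n : ℕ) :
    HasSum (fun k : ℕ => s ^ k * (c * n.choose k * x₀ ^ (n - k))) (c * (x₀ + s) ^ n) := by
  have h : HasSum (fun k : ℕ => s ^ k * (c * n.choose k * x₀ ^ (n - k)))
      (∑ k ∈ Finset.range (n + 1), s ^ k * (c * n.choose k * x₀ ^ (n - k))) := by
    refine hasSum_sum_of_ne_finset_zero fun k hk => ?_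
    have : n < k := by simpa using hk
    simp [Nat.choose_eq_zero_of_lt this]
  convert h using 1
  rw [add_comm x₀ s, add_pow, Finset.mul_sum]
  exact Finset.sum_congr rfl fun k _ => by ring

lemma summable_double {a : ℕ → ℝ} (ha : ∀ n, 0 ≤ a n) {x₀ s : ℝ} (hx₀ : 0 ≤ x₀)
    (h : Summable fun n : ℕ => a n * (x₀ + |s|) ^ n) :
    Summable fun q : ℕ × ℕ => s ^ q.2 * (a q.1 * q.1.choose q.2 * x₀ ^ (q.1 - q.2)) := by
  have hnn : Summable fun q : ℕ × ℕ => |s| ^ q.2 * (a q.1 * q.1.choose q.2 * x₀ ^ (q.1 - q.2)) := by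
    rw [summable_prod_of_nonneg]
    · refine ⟨fun n => (hasSum_binomial (a n) x₀ |s| n).summable, ?_⟩
      simpa only [(hasSum_binomial _ x₀ |s| _).tsum_eq] using h
    · intro q
      have := ha q.1
      simp only [Pi.zero_apply]
      positivity
  refine Summable.of_norm (hnn.congr fun q => ?_)
  rw [Real.norm_eq_abs, abs_mul, abs_pow, abs_of_nonneg (a := a q.1 * _ * _)]
  have := ha q.1
  positivity

/-- The Taylor series at `x₀` of a power series with nonnegative coefficients sums to the function
wherever `x₀ + |s|` lies in the domain of convergence. -/
lemma hasSum_taylorCoeffAt {a : ℕ → ℝ} (ha : ∀ n, 0 ≤ a n) {x₀ s : ℝ} (hx₀ : 0 ≤ x₀)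
    (h : Summable fun n : ℕ => a n * (x₀ + |s|) ^ n) :
    HasSum (fun k => s ^ k * taylorCoeffAt a x₀ k) (∑' n : ℕ, a n * (x₀ + s) ^ n) := by
  have hF := summable_double ha hx₀ h
  have h2 := hF.prod_symm.prod
  have e := hF.tsum_prod
  simp only [(hasSum_binomial _ x₀ s _).tsum_eq] at e
  have h3 := hF.prod_symm.tsum_prod
  have h4 : ∑' q : ℕ × ℕ, s ^ q.swap.2 * (a q.swap.1 * q.swap.1.choose q.swap.2
      * x₀ ^ (q.swap.1 - q.swap.2)) = _ := (Equiv.prodComm ℕ ℕ).tsum_eq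
    (fun q : ℕ × ℕ => s ^ q.2 * (a q.1 * q.1.choose q.2 * x₀ ^ (q.1 - q.2)))
  have h5 := h2.hasSum
  rw [← h3, h4, e] at h5
  simpa only [Prod.swap, tsum_mul_left, taylorCoeffAt] using h5

/-- Tonelli: convergence of the Taylor series at `x₀` forces convergence of the original series. -/
lemma summable_of_taylorCoeffAt {a : ℕ → ℝ} (ha : ∀ n, 0 ≤ a n) {x₀ t : ℝ} (hx₀ : 0 ≤ x₀)
    (ht : 0 ≤ t) (hc : ∀ k : ℕ, Summable fun n : ℕ => a n * n.choose k * x₀ ^ (n - k))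
    (h : Summable fun k => t ^ k * taylorCoeffAt a x₀ k) :
    Summable fun n : ℕ => a n * (x₀ + t) ^ n := by
  have hF : Summable fun q : ℕ × ℕ => t ^ q.1 * (a q.2 * q.2.choose q.1 * x₀ ^ (q.2 - q.1)) := by
    rw [summable_prod_of_nonneg]
    · refine ⟨fun k => (hc k).mul_left (t ^ k), ?_⟩
      simpa only [tsum_mul_left, taylorCoeffAt] using h
    · intro q
      have := ha q.2
      simp only [Pi.zero_apply]
      positivity
  have h2 := hF.prod_symm.prod
  simpa only [Prod.swap, (hasSum_binomial _ x₀ t _).tsum_eq] using h2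

/-- **Pringsheim's theorem**, real form: if a power series with nonnegative coefficients agrees to
the left of `r` with a function analytic at `r`, then it converges at some point beyond `r`. -/
lemma exists_gt_summable_of_analyticAt {a : ℕ → ℝ} (ha : ∀ n, 0 ≤ a n) {r : ℝ} (hr : 0 < r)
    (hlt : ∀ x : ℝ, 0 ≤ x → x < r → Summable fun n : ℕ => a n * x ^ n)
    {φ : ℝ → ℝ} (hφ : AnalyticAt ℝ φ r)
    (heq : ∀ᶠ x in 𝓝[<] r, φ x = ∑' n : ℕ, a n * x ^ n) :
    ∃ x, r < x ∧ Summable fun n : ℕ => a n * x ^ n := by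
  obtain ⟨p, ρ, hp⟩ := hφ
  obtain ⟨ε₁, hε₁, hερ⟩ := ENNReal.lt_iff_exists_nnreal_btwn.1 hp.r_pos
  have hε₁ : 0 < (ε₁ : ℝ) := by exact_mod_cast hε₁
  obtain ⟨l, hl, hlr⟩ := mem_nhdsLT_iff_exists_Ioo_subset.1 heq
  have hl : l < r := hl
  obtain ⟨ε, hε, hεε, hεr, hεl⟩ : ∃ ε : ℝ, 0 < ε ∧ ε ≤ ε₁ ∧ ε ≤ r ∧ ε ≤ r - l :=
    ⟨min ε₁ (min r (r - l)), by simp [hε₁, hr, hl], by simp, by simp, by simp⟩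
  -- Recentre at `r - ε / 4`, where the radius is still at least `3 ε / 4`.
  have hy : ‖-(ε / 4)‖ₑ < ρ := by
    refine lt_of_le_of_lt ?_ hερ
    rw [← ofReal_norm, ENNReal.ofReal_le_iff_le_toReal (by simp)]
    simp [abs_of_pos hε]
    linarith
  have hq := hp.changeOrigin hy
  have hx₀ : 0 ≤ r + -(ε / 4) := by linarith
  have hT : ∀ s : ℝ, |s| < ε / 4 → HasSum (fun k => s ^ k * taylorCoeffAt a (r + -(ε / 4)) k)
      (∑' n : ℕ, a n * (r + -(ε / 4) + s) ^ n) := fun s hs =>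
    hasSum_taylorCoeffAt ha hx₀ (hlt _ (by positivity) (by linarith))
  have hnear : ∀ᶠ s : ℝ in 𝓝 0, |s| < ε / 4 :=
    (continuous_abs.tendsto' (0 : ℝ) 0 abs_zero).eventually (gt_mem_nhds (by positivity))
  have hφT : HasFPowerSeriesAt φ (FormalMultilinearSeries.ofScalars ℝ
      (taylorCoeffAt a (r + -(ε / 4)))) (r + -(ε / 4)) := by
    rw [hasFPowerSeriesAt_iff]
    filter_upwards [hnear] with s hs
    have hmem : φ (r + -(ε / 4) + s) = ∑' n : ℕ, a n * (r + -(ε / 4) + s) ^ n :=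
      hlr ⟨by linarith [(abs_lt.1 hs).1], by linarith [(abs_lt.1 hs).2]⟩
    simpa [FormalMultilinearSeries.coeff_ofScalars, hmem] using hT s hs
  have hqT := hq.hasFPowerSeriesAt.eq_formalMultilinearSeries hφT
  -- Evaluating at `t = ε / 2` reaches `r + ε / 4`.
  have hS := hq.hasSum (y := ε / 2) (by
    rw [Metric.mem_eball, edist_zero_right, lt_tsub_iff_right]
    refine lt_of_le_of_lt ?_ hερ
    rw [← enorm_eq_nnnorm, ← ofReal_norm, ← ofReal_norm,
      ← ENNReal.ofReal_add (norm_nonneg _) (norm_nonneg _),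
      ENNReal.ofReal_le_iff_le_toReal (by simp)]
    simp [abs_of_pos hε]
    linarith)
  rw [hqT] at hS
  simp only [FormalMultilinearSeries.ofScalars_apply_eq, smul_eq_mul] at hS
  refine ⟨r + -(ε / 4) + ε / 2, by linarith,
    summable_of_taylorCoeffAt ha hx₀ (by positivity) (fun k => ?_)
      (hS.summable.congr fun k => mul_comm _ _)⟩
  have hd := (summable_double ha (s := ε / 8) hx₀ (hlt _ (by positivity)
    (by rw [abs_of_pos (by positivity)]; linarith))).prod_symm.prod_factor k
  have hpow : (ε / 8) ^ k ≠ 0 := by positivity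
  exact (summable_mul_left_iff hpow).1 hd

/-- One-sided Lipschitz bound at `r`, with constant `g'(r) = ∑ n a_n rⁿ / r`. -/
lemma sub_tsum_le {a : ℕ → ℝ} (ha : ∀ n, 0 ≤ a n) {r : ℝ} (hr : 0 < r)
    (hlt : ∀ x : ℝ, 0 ≤ x → x < r → Summable fun n : ℕ => a n * x ^ n)
    (hsum : Summable fun n : ℕ => a n * r ^ n)
    (hsum' : Summable fun n : ℕ => (n : ℝ) * a n * r ^ n) {x : ℝ} (hx : 0 ≤ x) (hxr : x < r) :
    ∑' n : ℕ, a n * r ^ n - ∑' n : ℕ, a n * x ^ n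
      ≤ (∑' n : ℕ, (n : ℝ) * a n * r ^ n) / r * (r - x) := by
  rw [← hsum.tsum_sub (hlt x hx hxr), div_mul_eq_mul_div, mul_div_assoc, ← tsum_mul_right]
  refine (hsum.sub (hlt x hx hxr)).tsum_le_tsum (fun n => ?_) (hsum'.mul_right _)
  -- Bernoulli's inequality for `x / r = 1 - (r - x) / r`.
  have hb : -2 ≤ -((r - x) / r) := by
    have : (r - x) / r ≤ 1 := (div_le_one hr).2 (by linarith)
    linarith
  have hB := one_add_mul_le_pow hb n
  have hxe : x = r * (1 + -((r - x) / r)) := by field_simp; ring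
  have hxn : x ^ n = r ^ n * (1 + -((r - x) / r)) ^ n := by rw [← mul_pow, ← hxe]
  rw [hxn]
  have hc : 0 ≤ a n * r ^ n := mul_nonneg (ha n) (by positivity)
  nlinarith [mul_le_mul_of_nonneg_left hB hc]

lemma analyticAt_tsum_of_lt {h : ℕ → ℝ} (hh : ∀ m, 0 ≤ h m) {y z : ℝ} (hz : 0 ≤ z) (hzy : z < y)
    (hy : Summable fun m : ℕ => h m * y ^ m) :
    AnalyticAt ℝ (fun w => ∑' m : ℕ, h m * w ^ m) z := by
  have hy0 : 0 ≤ y := hz.trans hzy.le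
  have hrad : ((y.toNNReal : NNReal) : ENNReal) ≤ (FormalMultilinearSeries.ofScalars ℝ h).radius := by
    refine FormalMultilinearSeries.le_radius_of_summable _ (hy.congr fun m => ?_)
    rw [FormalMultilinearSeries.ofScalars_norm, Real.norm_of_nonneg (hh m),
      Real.coe_toNNReal y hy0]
  have hmem : z ∈ Metric.eball (0 : ℝ) (FormalMultilinearSeries.ofScalars ℝ h).radius := by
    refine Metric.mem_eball.2 (lt_of_lt_of_le ?_ hrad)
    rw [edist_zero_right, ← ofReal_norm, Real.norm_of_nonneg hz,
      ENNReal.ofReal_lt_iff_lt_toReal hz (by simp)]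
    simpa [hy0] using hzy
  have := (FormalMultilinearSeries.ofScalars ℝ h).analyticOnNhd z hmem
  refine this.congr (Eventually.of_forall fun w => ?_)
  exact tsum_congr fun m => by rw [FormalMultilinearSeries.ofScalars_apply_eq, smul_eq_mul]


/-- Let `a_n ≥ 0` with `a_0 = 0` and some `a_n > 0` (`n ≥ 1`), and let `r ∈ (0,∞)` be the
radius of convergence of `g(x) = ∑ a_n xⁿ` (summable for `0 ≤ x < r`, not summable for
`x > r`), with both `∑ a_n rⁿ` and `∑ n·a_n rⁿ` summable.  If `h_m ≥ 0` and Tutte's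
compositional identity `h(g(x)) = g(x) - x` holds for all `0 ≤ x < r`, then the radius of
convergence of `h`, namely `sup { y ≥ 0 : ∑ h_m yᵐ summable }`, equals `g(r)`.  This is
the paper's identity `r_h = g(r_g)`. -/
theorem stmt_8 (a h : ℕ → ℝ) (ha : ∀ n, 0 ≤ a n) (hh : ∀ m, 0 ≤ h m)
    (ha0 : a 0 = 0) (hapos : ∃ n, 1 ≤ n ∧ 0 < a n)
    (r : ℝ) (hr : 0 < r)
    (hlt : ∀ x : ℝ, 0 ≤ x → x < r → Summable fun n : ℕ => a n * x ^ n)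
    (hgt : ∀ x : ℝ, r < x → ¬ Summable fun n : ℕ => a n * x ^ n)
    (hsum : Summable fun n : ℕ => a n * r ^ n)
    (hsum' : Summable fun n : ℕ => (n : ℝ) * a n * r ^ n)
    (hcomp : ∀ x : ℝ, 0 ≤ x → x < r →
      Summable (fun m : ℕ => h m * (∑' n : ℕ, a n * x ^ n) ^ m) ∧
        ∑' m : ℕ, h m * (∑' n : ℕ, a n * x ^ n) ^ m = (∑' n : ℕ, a n * x ^ n) - x) :
    sSup {y : ℝ | 0 ≤ y ∧ Summable fun m : ℕ => h m * y ^ m} =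
      ∑' n : ℕ, a n * r ^ n := by
  set g : ℝ → ℝ := fun x => ∑' n : ℕ, a n * x ^ n with hg
  have hg0 : ∀ x, 0 ≤ x → 0 ≤ g x := fun x hx =>
    tsum_nonneg fun n => mul_nonneg (ha n) (pow_nonneg hx n)
  have hcont : ContinuousOn g (Set.Icc 0 r) := by
    refine continuousOn_tsum (fun n => by fun_prop) hsum fun n x hx => ?_
    rw [Real.norm_of_nonneg (mul_nonneg (ha n) (pow_nonneg hx.1 n))]
    exact mul_le_mul_of_nonneg_left (pow_le_pow_left₀ hx.1 hx.2 n) (ha n)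
  have hIoo : Set.Ioo 0 r ∈ 𝓝[<] r := Ioo_mem_nhdsLT hr
  have htend : Tendsto g (𝓝[<] r) (𝓝 (g r)) :=
    (hcont r ⟨hr.le, le_rfl⟩).mono_left
      (nhdsWithin_le_iff.2 (mem_of_superset hIoo Set.Ioo_subset_Icc_self))
  refine IsLUB.csSup_eq (a := g r) ⟨?_, ?_⟩ ⟨g 0, hg0 0 le_rfl, (hcomp 0 le_rfl hr).1⟩
  · rintro y ⟨-, hys⟩
    by_contra! hlty
    set ψ : ℝ → ℝ := fun w => w - ∑' m : ℕ, h m * w ^ m with hψ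
    have hψa : AnalyticAt ℝ ψ (g r) :=
      analyticAt_id.sub (analyticAt_tsum_of_lt hh (hg0 r hr.le) hlty hys)
    have hψg : ∀ x ∈ Set.Ioo 0 r, ψ (g x) = x := fun x hx => by
      have := (hcomp x hx.1.le hx.2).2
      simp only [hψ, hg] at this ⊢
      linarith
    have hψr : ψ (g r) = r := by
      refine tendsto_nhds_unique (hψa.continuousAt.tendsto.comp htend) ?_
      refine Tendsto.congr' ?_ (tendsto_id.mono_left nhdsWithin_le_nhds)
      filter_upwards [hIoo] with x hx using (hψg x hx).symm
    have hd : deriv ψ (g r) ≠ 0 := by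
      intro hd
      -- A vanishing derivative would give `x - r = o(g x - g r) = o(x - r)`.
      have h1 := hψa.differentiableAt.hasDerivAt.isLittleO
      rw [hd] at h1
      have h2 := h1.comp_tendsto htend
      have h3 : (fun x => x - r) =o[𝓝[<] r] fun x => g x - g r := by
        refine h2.congr' ?_ .rfl
        filter_upwards [hIoo] with x hx
        simp [hψg x hx, hψr]
      have h4 : (fun x => g x - g r) =O[𝓝[<] r] fun x => x - r := by
        refine Asymptotics.IsBigO.of_bound ((∑' n : ℕ, (n : ℝ) * a n * r ^ n) / r) ?_
        filter_upwards [hIoo] with x hx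
        have hle := sub_tsum_le ha hr hlt hsum hsum' hx.1.le hx.2
        have hmono : g x ≤ g r := (hlt x hx.1.le hx.2).tsum_le_tsum (fun n =>
          mul_le_mul_of_nonneg_left (pow_le_pow_left₀ hx.1.le hx.2.le n) (ha n)) hsum
        rw [norm_sub_rev, norm_sub_rev x, Real.norm_of_nonneg (sub_nonneg.2 hmono),
          Real.norm_of_nonneg (sub_nonneg.2 hx.2.le)]
        exact hle
      refine Asymptotics.isLittleO_irrefl (Eventually.frequently ?_) (h3.trans_isBigO h4)
      filter_upwards [hIoo] with x hx using sub_ne_zero.2 hx.2.ne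
    have hφ := hψa.analyticAt_localInverse hd
    rw [hψr] at hφ
    obtain ⟨x, hx, hxs⟩ := exists_gt_summable_of_analyticAt ha hr hlt hφ (by
      filter_upwards [hIoo, htend.eventually
        (HasStrictDerivAt.eventually_left_inverse hψa.hasStrictDerivAt hd)] with x hx hxi
      rwa [hψg x hx] at hxi)
    exact hgt x hx hxs
  · intro b hb
    refine le_of_tendsto htend ?_
    filter_upwards [hIoo] with x hx
    exact hb ⟨hg0 x hx.1.le, (hcomp x hx.1.le hx.2).1⟩
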